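/- Lemma 2.2: Let (u,v) be a classical solution of problem (1.1) on [0,T). Then there exists a constant M > 1 such that e^{v(x,t)} ≤ M e^{u(x,t)} and e^{u(x,t)} ≤ M e^{v(x,t)} for all (x,t) ∈ cl(B_R) × [0,T). -/

import Mathlib

open Set Real Metric MeasureTheory Filter Topology

/-- The Euclidean Laplacian of `f : ℝⁿ → ℝ` at `x`, computed as the sum of second
directional derivatives along the coordinate directions. -/
noncomputable def lap {n : ℕ} (f : EuclideanSpace ℝ (Fin n) → ℝ)
    (x : EuclideanSpace ℝ (Fin n)) : ℝ :=
  ∑ i : Fin n, iteratedDeriv 2 (fun s : ℝ => f (x + s • EuclideanSpace.single i (1 : ℝ))) 0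

/-- The outward normal derivative `∇f · (x/R)` on the sphere of radius `R`. -/
noncomputable def normalDeriv {n : ℕ} (R : ℝ) (f : EuclideanSpace ℝ (Fin n) → ℝ)
    (x : EuclideanSpace ℝ (Fin n)) : ℝ :=
  deriv (fun s : ℝ => f (x + s • (R⁻¹ • x))) 0

/-- Admissible initial data for problem (1.1): nonnegative, smooth, radial with
nondecreasing radial profiles, and satisfying the compatibility conditions. -/
structure AdmissibleData (n : ℕ) (R : ℝ)
    (u₀ v₀ : EuclideanSpace ℝ (Fin n) → ℝ) : Prop where
  u0_nonneg : ∀ x ∈ closedBall (0 : EuclideanSpace ℝ (Fin n)) R, 0 ≤ u₀ x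
  v0_nonneg : ∀ x ∈ closedBall (0 : EuclideanSpace ℝ (Fin n)) R, 0 ≤ v₀ x
  u0_smooth : ContDiffOn ℝ (⊤ : ℕ∞) u₀ (closedBall (0 : EuclideanSpace ℝ (Fin n)) R)
  v0_smooth : ContDiffOn ℝ (⊤ : ℕ∞) v₀ (closedBall (0 : EuclideanSpace ℝ (Fin n)) R)
  u0_radial_mono : ∀ x ∈ closedBall (0 : EuclideanSpace ℝ (Fin n)) R,
    ∀ y ∈ closedBall (0 : EuclideanSpace ℝ (Fin n)) R, ‖x‖ ≤ ‖y‖ → u₀ x ≤ u₀ y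
  v0_radial_mono : ∀ x ∈ closedBall (0 : EuclideanSpace ℝ (Fin n)) R,
    ∀ y ∈ closedBall (0 : EuclideanSpace ℝ (Fin n)) R, ‖x‖ ≤ ‖y‖ → v₀ x ≤ v₀ y
  compat_u : ∀ x : EuclideanSpace ℝ (Fin n), ‖x‖ = R → normalDeriv R u₀ x = Real.exp (v₀ x)
  compat_v : ∀ x : EuclideanSpace ℝ (Fin n), ‖x‖ = R → normalDeriv R v₀ x = Real.exp (u₀ x)
  compat_u' : ∀ x ∈ closedBall (0 : EuclideanSpace ℝ (Fin n)) R, 0 ≤ lap u₀ x + Real.exp (v₀ x)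
  compat_v' : ∀ x ∈ closedBall (0 : EuclideanSpace ℝ (Fin n)) R, 0 ≤ lap v₀ x + Real.exp (u₀ x)

/-- A classical solution of problem (1.1) on `[0,T)` on the ball of radius `R`:
continuous on `cl(B_R) × [0,T)`, of class C²,¹ on `cl(B_R) × (0,T)`, satisfying the
equations `u_t = Δu + λ₁ e^v`, `v_t = Δv + λ₂ e^u` in `B_R × (0,T)`, the boundary
conditions `∂u/∂η = e^v`, `∂v/∂η = e^u` on `∂B_R × (0,T)`, and the initial conditions. -/
structure IsClassicalSolution (n : ℕ) (R T lam1 lam2 : ℝ)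
    (u v : EuclideanSpace ℝ (Fin n) → ℝ → ℝ)
    (u₀ v₀ : EuclideanSpace ℝ (Fin n) → ℝ) : Prop where
  cont_u : ContinuousOn (fun p : EuclideanSpace ℝ (Fin n) × ℝ => u p.1 p.2)
    ((closedBall (0 : EuclideanSpace ℝ (Fin n)) R) ×ˢ Ico (0 : ℝ) T)
  cont_v : ContinuousOn (fun p : EuclideanSpace ℝ (Fin n) × ℝ => v p.1 p.2)
    ((closedBall (0 : EuclideanSpace ℝ (Fin n)) R) ×ˢ Ico (0 : ℝ) T)
  reg_space_u : ∀ t ∈ Ioo (0 : ℝ) T,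
    ContDiffOn ℝ 2 (fun x => u x t) (closedBall (0 : EuclideanSpace ℝ (Fin n)) R)
  reg_space_v : ∀ t ∈ Ioo (0 : ℝ) T,
    ContDiffOn ℝ 2 (fun x => v x t) (closedBall (0 : EuclideanSpace ℝ (Fin n)) R)
  reg_time_u : ∀ x ∈ closedBall (0 : EuclideanSpace ℝ (Fin n)) R, ∀ t ∈ Ioo (0 : ℝ) T,
    DifferentiableAt ℝ (u x) t
  reg_time_v : ∀ x ∈ closedBall (0 : EuclideanSpace ℝ (Fin n)) R, ∀ t ∈ Ioo (0 : ℝ) T,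
    DifferentiableAt ℝ (v x) t
  pde_u : ∀ x ∈ ball (0 : EuclideanSpace ℝ (Fin n)) R, ∀ t ∈ Ioo (0 : ℝ) T,
    deriv (u x) t = lap (fun y => u y t) x + lam1 * Real.exp (v x t)
  pde_v : ∀ x ∈ ball (0 : EuclideanSpace ℝ (Fin n)) R, ∀ t ∈ Ioo (0 : ℝ) T,
    deriv (v x) t = lap (fun y => v y t) x + lam2 * Real.exp (u x t)
  bc_u : ∀ x : EuclideanSpace ℝ (Fin n), ‖x‖ = R → ∀ t ∈ Ioo (0 : ℝ) T,
    normalDeriv R (fun y => u y t) x = Real.exp (v x t)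
  bc_v : ∀ x : EuclideanSpace ℝ (Fin n), ‖x‖ = R → ∀ t ∈ Ioo (0 : ℝ) T,
    normalDeriv R (fun y => v y t) x = Real.exp (u x t)
  init_u : ∀ x ∈ closedBall (0 : EuclideanSpace ℝ (Fin n)) R, u x 0 = u₀ x
  init_v : ∀ x ∈ closedBall (0 : EuclideanSpace ℝ (Fin n)) R, v x 0 = v₀ x

/-- `(u,v)` blows up at time `T`: `limsup_{t→T⁻} sup_{cl(B_R)} (u(·,t) + v(·,t)) = ∞`. -/
def BlowsUpAt (n : ℕ) (R T : ℝ) (u v : EuclideanSpace ℝ (Fin n) → ℝ → ℝ) : Prop :=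
  ∀ M : ℝ, ∃ᶠ t in 𝓝[<] T, ∃ x ∈ closedBall (0 : EuclideanSpace ℝ (Fin n)) R, M < u x t + v x t

/-!
The difference `w = v - u` satisfies `w_t - Δw = λ₂ e^u - λ₁ e^v` in the ball and
`∂w/∂η = e^u - e^v` on the sphere. Where `w` exceeds both `0` and `λ₂ / λ₁`, both right-hand sides
are negative (since `e^w > w`), whereas at a positive time realizing the maximum of `w` over the
past one has `w_t ≥ 0` and either `Δw ≤ 0` or `∂w/∂η ≥ 0`. Hence `w` is bounded above by the
largest of `0`, `λ₂ / λ₁` and its initial maximum. Exchanging `(u, λ₁)` with `(v, λ₂)` bounds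
`u - v`.
-/

theorem deriv_nonneg_of_isLocalMaxOn_Iic {f : ℝ → ℝ} {a : ℝ} (h : IsLocalMaxOn f (Iic a) a) :
    0 ≤ deriv f a := by
  by_cases hf : DifferentiableAt ℝ f a
  · have hcone : (-1 : ℝ) ∈ posTangentConeAt (Iic a) a :=
      mem_posTangentConeAt_of_segment_subset <|
        (convex_Iic a).segment_subset self_mem_Iic (by simp)
    have hneg := h.hasFDerivWithinAt_nonpos hf.hasDerivAt.hasFDerivAt.hasFDerivWithinAt hcone
    simpa using hneg
  · rw [deriv_zero_of_not_differentiableAt hf]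

theorem iteratedDeriv_two_nonpos_of_isLocalMax {f : ℝ → ℝ} {a : ℝ} (hf : ContinuousAt f a)
    (h : IsLocalMax f a) : iteratedDeriv 2 f a ≤ 0 := by
  rw [iteratedDeriv_succ, iteratedDeriv_one]
  by_contra! hpos
  -- A positive second derivative would make `a` a local minimum too, so `f` is constant near `a`.
  have hmin : IsLocalMin f a := isLocalMin_of_deriv_deriv_pos hpos h.deriv_eq_zero hf
  have hconst : f =ᶠ[𝓝 a] fun _ => f a := by
    filter_upwards [h, hmin] with s hle hge using le_antisymm hle hge
  rw [hconst.deriv.deriv_eq] at hpos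
  simp at hpos

section DifferentialOperators

variable {n : ℕ} {f g : EuclideanSpace ℝ (Fin n) → ℝ} {x : EuclideanSpace ℝ (Fin n)} {R : ℝ}

theorem lap_nonpos_of_isLocalMax (hf : ContinuousAt f x) (h : IsLocalMax f x) : lap f x ≤ 0 := by
  refine Finset.sum_nonpos fun i _ => ?_
  set line : ℝ → EuclideanSpace ℝ (Fin n) := fun s => x + s • EuclideanSpace.single i 1
  have hline : ContinuousAt line 0 := by fun_prop
  have hzero : line 0 = x := by simp [line]
  rw [← hzero] at hf h
  exact iteratedDeriv_two_nonpos_of_isLocalMax (hf.comp hline) (IsLocalMax.comp_continuous h hline)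

theorem lap_sub (hf : ContDiffAt ℝ 2 f x) (hg : ContDiffAt ℝ 2 g x) :
    lap (fun y => f y - g y) x = lap f x - lap g x := by
  simp only [lap, ← Finset.sum_sub_distrib]
  refine Finset.sum_congr rfl fun i _ => ?_
  set line : ℝ → EuclideanSpace ℝ (Fin n) := fun s => x + s • EuclideanSpace.single i 1
  have hline : ContDiffAt ℝ 2 line 0 := by fun_prop
  have hzero : line 0 = x := by simp [line]
  rw [← hzero] at hf hg
  exact iteratedDeriv_fun_sub (hf.comp 0 hline) (hg.comp 0 hline)

theorem normalDeriv_sub (hf : DifferentiableAt ℝ (fun s : ℝ => f (x + s • (R⁻¹ • x))) 0)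
    (hg : DifferentiableAt ℝ (fun s : ℝ => g (x + s • (R⁻¹ • x))) 0) :
    normalDeriv R (fun y => f y - g y) x = normalDeriv R f x - normalDeriv R g x :=
  deriv_fun_sub hf hg

theorem normalDeriv_nonneg_of_isMaxOn (hR : 0 < R) (hx : ‖x‖ = R)
    (h : IsMaxOn f (closedBall 0 R) x) : 0 ≤ normalDeriv R f x := by
  refine deriv_nonneg_of_isLocalMaxOn_Iic ?_
  filter_upwards [Ioc_mem_nhdsLE (neg_lt_zero.mpr hR)] with s hs
  have hmem : x + s • (R⁻¹ • x) ∈ closedBall (0 : EuclideanSpace ℝ (Fin n)) R := by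
    have hunit : ‖R⁻¹ • x‖ = 1 := by
      rw [norm_smul, hx, norm_inv, norm_of_nonneg hR.le, inv_mul_cancel₀ hR.ne']
    have hray : x + s • (R⁻¹ • x) = (R + s) • (R⁻¹ • x) := by
      rw [add_smul, smul_inv_smul₀ hR.ne']
    rw [mem_closedBall_zero_iff, hray, norm_smul, hunit, mul_one,
      norm_of_nonneg (by linarith [hs.1])]
    linarith [hs.2]
  simpa using h hmem

end DifferentialOperators

theorem exists_isMaxOn_slices_of_lt {X : Type*} [TopologicalSpace X] {K : Set X}
    {w : X → ℝ → ℝ} {C T : ℝ} (hK : IsCompact K)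
    (hw : ContinuousOn (fun p : X × ℝ => w p.1 p.2) (K ×ˢ Ico 0 T))
    (hinit : ∀ x ∈ K, w x 0 ≤ C) {y : X} (hy : y ∈ K) {τ : ℝ} (hτ : τ ∈ Ico 0 T)
    (hlt : C < w y τ) :
    ∃ x ∈ K, ∃ t ∈ Ioo 0 T,
      C < w x t ∧ IsMaxOn (fun z => w z t) K x ∧ IsMaxOn (w x) (Icc 0 t) t := by
  have hsub : Icc 0 τ ⊆ Ico 0 T := Icc_subset_Ico_right hτ.2
  obtain ⟨⟨x, t⟩, ⟨hx, ht⟩, hmax⟩ := (hK.prod isCompact_Icc).exists_isMaxOn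
    ⟨(y, τ), hy, right_mem_Icc.mpr hτ.1⟩ (hw.mono (prod_mono_right hsub))
  have hCt : C < w x t := hlt.trans_le (hmax (mk_mem_prod hy (right_mem_Icc.mpr hτ.1)))
  have ht0 : 0 ≠ t := by
    rintro rfl
    exact hCt.not_ge (hinit x hx)
  exact ⟨x, hx, t, ⟨ht.1.lt_of_ne ht0, (hsub ht).2⟩, hCt, fun z hz => hmax (mk_mem_prod hz ht),
    fun s hs => hmax (mk_mem_prod hx (Icc_subset_Icc_right ht.2 hs))⟩

theorem le_of_deriv_lt_lap_of_normalDeriv_neg {n : ℕ} {R T C : ℝ}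
    {w : EuclideanSpace ℝ (Fin n) → ℝ → ℝ} (hR : 0 < R)
    (hw : ContinuousOn (fun p : EuclideanSpace ℝ (Fin n) × ℝ => w p.1 p.2)
      (closedBall 0 R ×ˢ Ico 0 T))
    (hinit : ∀ x ∈ closedBall 0 R, w x 0 ≤ C)
    (hinterior : ∀ x ∈ ball 0 R, ∀ t ∈ Ioo 0 T, C < w x t →
      deriv (w x) t < lap (fun y => w y t) x)
    (hboundary : ∀ x, ‖x‖ = R → ∀ t ∈ Ioo 0 T, C < w x t → normalDeriv R (fun y => w y t) x < 0) :
    ∀ x ∈ closedBall 0 R, ∀ t ∈ Ico 0 T, w x t ≤ C := by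
  intro y hy τ hτ
  by_contra! hlt
  obtain ⟨x, hx, t, ht, hCt, hspace, htime⟩ :=
    exists_isMaxOn_slices_of_lt (isCompact_closedBall _ _) hw hinit hy hτ hlt
  rcases (mem_closedBall_zero_iff.mp hx).lt_or_eq with hxR | hxR
  · have hball : x ∈ ball 0 R := mem_ball_zero_iff.mpr hxR
    have hnhds : closedBall 0 R ∈ 𝓝 x := closedBall_mem_nhds_of_mem hball
    have hslice : ContinuousOn (fun y => w y t) (closedBall 0 R) :=
      hw.comp (by fun_prop) fun y hy => mk_mem_prod hy (Ioo_subset_Ico_self ht)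
    have hlap : lap (fun y => w y t) x ≤ 0 :=
      lap_nonpos_of_isLocalMax (hslice.continuousAt hnhds) (hspace.isLocalMax hnhds)
    have hpast : IsLocalMaxOn (w x) (Iic t) t :=
      htime.filter_mono (le_principal_iff.mpr (Icc_mem_nhdsLE ht.1))
    have hderiv : 0 ≤ deriv (w x) t := deriv_nonneg_of_isLocalMaxOn_Iic hpast
    exact (hlap.trans hderiv).not_gt (hinterior x hball t ht hCt)
  · exact (normalDeriv_nonneg_of_isMaxOn hR hxR hspace).not_gt (hboundary x hxR t ht hCt)

namespace IsClassicalSolution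

variable {n : ℕ} {R T lam1 lam2 : ℝ} {u v : EuclideanSpace ℝ (Fin n) → ℝ → ℝ}
  {u₀ v₀ : EuclideanSpace ℝ (Fin n) → ℝ} {x : EuclideanSpace ℝ (Fin n)} {t : ℝ}

theorem swap (h : IsClassicalSolution n R T lam1 lam2 u v u₀ v₀) :
    IsClassicalSolution n R T lam2 lam1 v u v₀ u₀ :=
  ⟨h.cont_v, h.cont_u, h.reg_space_v, h.reg_space_u, h.reg_time_v, h.reg_time_u,
    h.pde_v, h.pde_u, h.bc_v, h.bc_u, h.init_v, h.init_u⟩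

theorem deriv_sub_eq (h : IsClassicalSolution n R T lam1 lam2 u v u₀ v₀)
    (hx : x ∈ ball 0 R) (ht : t ∈ Ioo 0 T) :
    deriv (fun s => v x s - u x s) t =
      lap (fun y => v y t - u y t) x + (lam2 * exp (u x t) - lam1 * exp (v x t)) := by
  have hnhds : closedBall 0 R ∈ 𝓝 x := closedBall_mem_nhds_of_mem hx
  have hx' : x ∈ closedBall 0 R := ball_subset_closedBall hx
  rw [deriv_fun_sub (h.reg_time_v x hx' t ht) (h.reg_time_u x hx' t ht), h.pde_u x hx t ht,
    h.pde_v x hx t ht, lap_sub ((h.reg_space_v t ht).contDiffAt hnhds)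
      ((h.reg_space_u t ht).contDiffAt hnhds)]
  ring

theorem normalDeriv_sub_eq (h : IsClassicalSolution n R T lam1 lam2 u v u₀ v₀)
    (hx : ‖x‖ = R) (ht : t ∈ Ioo 0 T) :
    normalDeriv R (fun y => v y t - u y t) x = exp (u x t) - exp (v x t) := by
  -- Regularity on the closed ball does not give two-sided differentiability along the normal; it
  -- holds because `normalDeriv` is not the junk value `0`.
  have hu := differentiableAt_of_deriv_ne_zero ((h.bc_u x hx t ht).trans_ne (exp_ne_zero _))
  have hv := differentiableAt_of_deriv_ne_zero ((h.bc_v x hx t ht).trans_ne (exp_ne_zero _))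
  rw [normalDeriv_sub hv hu, h.bc_u x hx t ht, h.bc_v x hx t ht]

theorem exists_sub_le (h : IsClassicalSolution n R T lam1 lam2 u v u₀ v₀)
    (hR : 0 < R) (hT : 0 < T) (hlam1 : 0 < lam1) :
    ∃ C : ℝ, ∀ x ∈ closedBall 0 R, ∀ t ∈ Ico 0 T, v x t - u x t ≤ C := by
  have hcont : ContinuousOn (fun p : EuclideanSpace ℝ (Fin n) × ℝ => v p.1 p.2 - u p.1 p.2)
      (closedBall 0 R ×ˢ Ico 0 T) := h.cont_v.sub h.cont_u
  obtain ⟨C₀, hC₀⟩ := (isCompact_closedBall (0 : EuclideanSpace ℝ (Fin n)) R).bddAbove_image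
    (f := fun x => v x 0 - u x 0)
    (hcont.comp (by fun_prop) fun x hx => mk_mem_prod hx (left_mem_Ico.mpr hT))
  refine ⟨max C₀ (max 0 (lam2 / lam1)), le_of_deriv_lt_lap_of_normalDeriv_neg hR hcont
    (fun x hx => le_max_of_le_left (hC₀ (mem_image_of_mem _ hx))) ?_ ?_⟩
  · intro x hx t ht hlt
    have hratio : lam2 / lam1 < exp (v x t - u x t) := by
      linarith [add_one_le_exp (v x t - u x t), (max_lt_iff.mp (max_lt_iff.mp hlt).2).2]
    rw [exp_sub, div_lt_div_iff₀ hlam1 (exp_pos _)] at hratio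
    rw [h.deriv_sub_eq hx ht]
    linarith
  · intro x hx t ht hlt
    have hlt' : u x t < v x t := sub_pos.mp (max_lt_iff.mp (max_lt_iff.mp hlt).2).1
    rw [h.normalDeriv_sub_eq hx ht]
    exact sub_neg.mpr (exp_lt_exp.mpr hlt')

end IsClassicalSolution

theorem exp_comparison_general {n : ℕ} {R T lam1 lam2 : ℝ}
    (hR : 0 < R) (hT : 0 < T) (hlam1 : 0 < lam1) (hlam2 : 0 < lam2)
    {u v : EuclideanSpace ℝ (Fin n) → ℝ → ℝ} {u₀ v₀ : EuclideanSpace ℝ (Fin n) → ℝ}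
    (hsol : IsClassicalSolution n R T lam1 lam2 u v u₀ v₀) :
    ∃ M : ℝ, 1 < M ∧ ∀ x ∈ closedBall (0 : EuclideanSpace ℝ (Fin n)) R, ∀ t ∈ Ico (0 : ℝ) T,
      exp (v x t) ≤ M * exp (u x t) ∧ exp (u x t) ≤ M * exp (v x t) := by
  obtain ⟨C₁, hC₁⟩ := hsol.exists_sub_le hR hT hlam1
  obtain ⟨C₂, hC₂⟩ := hsol.swap.exists_sub_le hR hT hlam2
  set C := max 1 (max C₁ C₂)
  have hC₁C : C₁ ≤ C := le_max_of_le_right (le_max_left _ _)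
  have hC₂C : C₂ ≤ C := le_max_of_le_right (le_max_right _ _)
  refine ⟨exp C, one_lt_exp_iff.mpr (one_pos.trans_le (le_max_left _ _)), fun x hx t ht => ?_⟩
  simp only [← exp_add, exp_le_exp]
  exact ⟨sub_le_iff_le_add.mp ((hC₁ x hx t ht).trans hC₁C),
    sub_le_iff_le_add.mp ((hC₂ x hx t ht).trans hC₂C)⟩

/-- Lemma 2.2: for a classical solution `(u,v)` of problem (1.1) on `[0,T)`, there exists
`M > 1` such that `e^v ≤ M e^u` and `e^u ≤ M e^v` on `cl(B_R) × [0,T)`. -/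
theorem exp_comparison {n : ℕ} (hn : 1 ≤ n) {R T lam1 lam2 : ℝ}
    (hR : 0 < R) (hT : 0 < T) (hlam1 : 0 < lam1) (hlam2 : 0 < lam2)
    {u v : EuclideanSpace ℝ (Fin n) → ℝ → ℝ} {u₀ v₀ : EuclideanSpace ℝ (Fin n) → ℝ}
    (hdata : AdmissibleData n R u₀ v₀)
    (hsol : IsClassicalSolution n R T lam1 lam2 u v u₀ v₀) :
    ∃ M : ℝ, 1 < M ∧ ∀ x ∈ closedBall (0 : EuclideanSpace ℝ (Fin n)) R, ∀ t ∈ Ico (0 : ℝ) T,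
      Real.exp (v x t) ≤ M * Real.exp (u x t) ∧ Real.exp (u x t) ≤ M * Real.exp (v x t) := by
  exact exp_comparison_general hR hT hlam1 hlam2 hsol
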